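/- Let λ = (λ₁,…,λ_n) be an n-tuple of integers such that the numbers ℓ_i = λ_i + n − i are pairwise distinct. Then for every integer m ≥ 1, the central element tr( D · (L⁺(L⁻)^{−1})^m ) acts in the module L_q(λ) as multiplication by the scalar ∑_{k=1}^n q^{−2ℓ_k m} · (∏_{j=1}^n [ℓ_j − ℓ_k + 1]_q) / (∏_{j≠k} [ℓ_j − ℓ_k]_q). -/

import Mathlib

open Matrix

noncomputable section

/-- The `R`-matrix of `U_q(gl_n)` as an `n²×n²` matrix. -/
def Rmat (q : ℂ) (n : ℕ) : Matrix (Fin n × Fin n) (Fin n × Fin n) ℂ :=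
  fun p r =>
    (if p = r then (if p.1 = p.2 then q else 1) else 0) +
      (if r.1 = p.2 ∧ r.2 = p.1 ∧ p.1 < p.2 then q - q⁻¹ else 0)

/-- Generators of `U_q(gl_n)`: a sign (`true` for `+`) and a pair of indices. -/
abbrev GenGL (n : ℕ) := Bool × Fin n × Fin n

/-- The generator `l^±_{ij}` in the free algebra. -/
def gl (n : ℕ) (p : Bool) (i j : Fin n) : FreeAlgebra ℂ (GenGL n) :=
  FreeAlgebra.ι ℂ (p, i, j)

/-- Embedding of an `n×n` matrix into the first tensor leg of `End(ℂ^n)⊗End(ℂ^n)`. -/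
def leg1 {n : ℕ} {A : Type*} [Semiring A] (m : Fin n → Fin n → A) :
    Matrix (Fin n × Fin n) (Fin n × Fin n) A :=
  fun v w => if v.2 = w.2 then m v.1 w.1 else 0

/-- Embedding of an `n×n` matrix into the second tensor leg of `End(ℂ^n)⊗End(ℂ^n)`. -/
def leg2 {n : ℕ} {A : Type*} [Semiring A] (m : Fin n → Fin n → A) :
    Matrix (Fin n × Fin n) (Fin n × Fin n) A :=
  fun v w => if v.1 = w.1 then m v.2 w.2 else 0

/-- The `R`-matrix with entries in the free algebra. -/
def RcGL (q : ℂ) (n : ℕ) : Matrix (Fin n × Fin n) (Fin n × Fin n) (FreeAlgebra ℂ (GenGL n)) :=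
  (Rmat q n).map (algebraMap ℂ (FreeAlgebra ℂ (GenGL n)))

/-- The defining relations of `U_q(gl_n)` in its `RTT` presentation. -/
inductive relGL (q : ℂ) (n : ℕ) :
    FreeAlgebra ℂ (GenGL n) → FreeAlgebra ℂ (GenGL n) → Prop
  | tri_minus {i j : Fin n} : i < j → relGL q n (gl n false i j) 0
  | tri_plus {i j : Fin n} : i < j → relGL q n (gl n true j i) 0
  | diag_mp (i : Fin n) : relGL q n (gl n false i i * gl n true i i) 1
  | diag_pm (i : Fin n) : relGL q n (gl n true i i * gl n false i i) 1
  | rll (p : Bool) (v w : Fin n × Fin n) :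
      relGL q n
        ((RcGL q n * leg1 (gl n p) * leg2 (gl n p)) v w)
        ((leg2 (gl n p) * leg1 (gl n p) * RcGL q n) v w)
  | rll_pm (v w : Fin n × Fin n) :
      relGL q n
        ((RcGL q n * leg1 (gl n true) * leg2 (gl n false)) v w)
        ((leg2 (gl n false) * leg1 (gl n true) * RcGL q n) v w)

/-- The quantized enveloping algebra `U_q(gl_n)` in its `RTT` presentation. -/
abbrev UqGL (q : ℂ) (n : ℕ) := RingQuot (relGL q n)

/-- The generator `l^±_{ij}` of `U_q(gl_n)`. -/
def lG (q : ℂ) (n : ℕ) (p : Bool) (i j : Fin n) : UqGL q n :=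
  RingQuot.mkAlgHom ℂ (relGL q n) (gl n p i j)

/-- The generator matrix `L^± = [l^±_{ij}]`. -/
def LM (q : ℂ) (n : ℕ) (p : Bool) : Matrix (Fin n) (Fin n) (UqGL q n) :=
  fun i j => lG q n p i j

/-- The diagonal matrix `D = diag(q^{n−1}, q^{n−3}, …, q^{−n+1})` over `A`. -/
def Dmat (q : ℂ) (n : ℕ) (A : Type*) [Ring A] [Algebra ℂ A] : Matrix (Fin n) (Fin n) A :=
  Matrix.diagonal fun i => algebraMap ℂ A (q ^ ((n : ℤ) - 1 - 2 * (i : ℤ)))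

/-- The inverse diagonal matrix `D⁻¹`. -/
def Dmatinv (q : ℂ) (n : ℕ) (A : Type*) [Ring A] [Algebra ℂ A] : Matrix (Fin n) (Fin n) A :=
  Matrix.diagonal fun i => algebraMap ℂ A (q ^ (-((n : ℤ) - 1 - 2 * (i : ℤ))))

/-- Quantum trace `tr_q X = tr(D X)`. -/
def trq {n : ℕ} {A : Type*} [Ring A] [Algebra ℂ A] (q : ℂ) (X : Matrix (Fin n) (Fin n) A) : A :=
  Matrix.trace (Dmat q n A * X)

/-- The `q`-number `[k]_q`. -/
def qint (q : ℂ) (k : ℤ) : ℂ := (q ^ k - q ^ (-k)) / (q - q⁻¹)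

end

/-! Write `T = L⁺(L⁻)⁻¹`. The defining relations say that `R L⁺₁` and `P R⁻¹ P L⁻₁` commute with the
second-leg copy `T₂`, hence with every power `(Tᵐ)₂`. The `q`-trace over the second leg of
`R⁻¹ X₂ R` is `tr_q X` times the identity, so `tr_q Tᵐ` commutes with all the generators and it
suffices to evaluate it on the highest weight vector `ξ`.

There `Tᵐ` acts triangularly, and one entry of the commutation relation with `L⁻` gives, after
solving a linear recursion,
`tᵢ Qⁿ⁻ⁱ (Tᵐ)ᵢᵢ ξ = Qⁿ⁻ⁱ (Tᵐ⁺¹)ᵢᵢ ξ - (Q - 1) ∑_{k > i} Qⁿ⁻ᵏ (Tᵐ⁺¹)ₖₖ ξ`, where `Q = q²` and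
`tᵢ = q ^ (-2 ℓᵢ)`. The sum `∑ x ∈ s, xᵐ ∏ y ≠ x, (Q x - y) / (x - y)` over the set
`s = {tᵢ, …, tₙ}` obeys the same recursion, and for `m = 0` it is `1 + Q + ⋯ + Qⁿ⁻ⁱ` by Lagrange
interpolation. Hence it is the scalar by which `∑_{k ≥ i} Qⁿ⁻ᵏ (Tᵐ)ₖₖ` acts on `ξ`.
-/

section HallLittlewood

open Polynomial

variable {K : Type*} [Field K] [DecidableEq K]

/-- The symmetric function `∑ xᵐ ∏ (Q x - y) / (x - y)` of a finite set of variables: up to a factor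
independent of the set, the one-row Hall–Littlewood polynomial with parameter `Q⁻¹`. It is the
closed form of the eigenvalues below. -/
def hallLittlewoodSum (Q : K) (m : ℕ) (s : Finset K) : K :=
  ∑ x ∈ s, x ^ m * ∏ y ∈ s.erase x, (Q * x - y) / (x - y)

theorem hallLittlewoodSum_empty (Q : K) (m : ℕ) : hallLittlewoodSum Q m ∅ = 0 :=
  Finset.sum_empty

theorem hallLittlewoodSum_succ_insert (Q : K) (m : ℕ) {a : K} {s : Finset K} (ha : a ∉ s) :
    hallLittlewoodSum Q (m + 1) (insert a s) =
      Q * hallLittlewoodSum Q (m + 1) s +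
        a * (hallLittlewoodSum Q m (insert a s) - hallLittlewoodSum Q m s) := by
  have split_insert (k : ℕ) : hallLittlewoodSum Q k (insert a s) =
      a ^ k * ∏ y ∈ s, (Q * a - y) / (a - y) +
        ∑ x ∈ s, x ^ k * ((Q * x - a) / (x - a) * ∏ y ∈ s.erase x, (Q * x - y) / (x - y)) := by
    rw [hallLittlewoodSum, Finset.sum_insert ha, Finset.erase_insert ha]
    congr 1
    refine Finset.sum_congr rfl fun x hx => ?_
    rw [Finset.erase_insert_of_ne (ne_of_mem_of_not_mem hx ha).symm,
      Finset.prod_insert fun h => ha (Finset.mem_of_mem_erase h)]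
  have term_eq : ∀ x ∈ s, ∀ p : K, x ^ (m + 1) * ((Q * x - a) / (x - a) * p) =
      Q * (x ^ (m + 1) * p) +
        a * (x ^ m * ((Q * x - a) / (x - a) * p) - x ^ m * p) := by
    intro x hx p
    have : x - a ≠ 0 := sub_ne_zero.2 (ne_of_mem_of_not_mem hx ha)
    field_simp
    ring
  rw [split_insert, split_insert, Finset.sum_congr rfl fun x hx => term_eq x hx _]
  simp only [hallLittlewoodSum, Finset.sum_add_distrib, ← Finset.mul_sum, Finset.sum_sub_distrib]
  ring

-- Interpolate `∏ y ∈ s, (Q X - y)` at the nodes `insert 0 s` and compare leading coefficients.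
theorem sub_one_mul_hallLittlewoodSum_zero (Q : K) {s : Finset K} (hs : 0 ∉ s) :
    (Q - 1) * hallLittlewoodSum Q 0 s = Q ^ s.card - 1 := by
  set f : K[X] := (Lagrange.nodal s id).comp (C Q * X) with hf
  have eval_f (x : K) : f.eval x = ∏ y ∈ s, (Q * x - y) := by
    simp [hf, eval_comp, Lagrange.eval_nodal]
  have degree_f : f.degree < (insert 0 s).card := by
    have natDegree_f : f.natDegree ≤ s.card := by
      refine natDegree_comp_le.trans ?_
      rw [Lagrange.natDegree_nodal]
      simpa using Nat.mul_le_mul_left s.card ((natDegree_C_mul_le Q X).trans natDegree_X_le)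
    rw [Finset.card_insert_of_notMem hs]
    exact degree_le_natDegree.trans_lt (Nat.cast_lt.2 (Nat.lt_succ_of_le natDegree_f))
  have coeff_f : f.coeff s.card = Q ^ s.card := by
    have := (Lagrange.nodal_monic (s := s) (v := (id : K → K))).coeff_natDegree
    rw [Lagrange.natDegree_nodal] at this
    rw [hf, comp_C_mul_X_coeff, this, one_mul]
  have node_zero : f.eval 0 / ∏ y ∈ s, (0 - y) = 1 := by
    rw [eval_f, mul_zero]
    exact div_self (Finset.prod_ne_zero_iff.2 fun y hy =>
      sub_ne_zero.2 (ne_of_mem_of_not_mem hy hs).symm)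
  have node_mem : ∀ x ∈ s, f.eval x / ∏ y ∈ (insert 0 s).erase x, (x - y) =
      (Q - 1) * ∏ y ∈ s.erase x, (Q * x - y) / (x - y) := by
    intro x hx
    have hx0 : x ≠ 0 := ne_of_mem_of_not_mem hx hs
    rw [eval_f, ← Finset.mul_prod_erase s _ hx, Finset.erase_insert_of_ne hx0.symm,
      Finset.prod_insert fun h => hs (Finset.mem_of_mem_erase h), sub_zero, Finset.prod_div_distrib,
      mul_div_mul_comm, ← sub_one_mul, mul_div_cancel_right₀ _ hx0]
  have interpolation := Lagrange.coeff_eq_sum (s := insert 0 s) (v := id)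
    Function.injective_id.injOn degree_f
  simp only [id] at interpolation
  rw [Finset.card_insert_of_notMem hs, Nat.add_sub_cancel, coeff_f, Finset.sum_insert hs,
    Finset.erase_insert hs, node_zero, Finset.sum_congr rfl node_mem, ← Finset.mul_sum]
    at interpolation
  simp only [hallLittlewoodSum, pow_zero, one_mul, interpolation, add_sub_cancel_left]

theorem hallLittlewoodSum_zero_insert {Q : K} (hQ : Q ≠ 1) {a : K} {s : Finset K} (ha : a ∉ s)
    (hs : 0 ∉ insert a s) :
    hallLittlewoodSum Q 0 (insert a s) = hallLittlewoodSum Q 0 s + Q ^ s.card := by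
  have h_insert := sub_one_mul_hallLittlewoodSum_zero Q hs
  have h := sub_one_mul_hallLittlewoodSum_zero Q fun h => hs (Finset.mem_insert_of_mem h)
  rw [Finset.card_insert_of_notMem ha] at h_insert
  refine mul_left_cancel₀ (sub_ne_zero.2 hQ) ?_
  linear_combination h_insert - h

end HallLittlewood

section UpperSet

open Finset

variable {ι : Type*} [LinearOrder ι] [LocallyFiniteOrderTop ι]

theorem upperSet_induction {motive : Finset ι → Prop} (empty : motive ∅)
    (cons : ∀ a, motive (Ioi a) → motive (Ici a)) {s : Finset ι}
    (hs : IsUpperSet (s : Set ι)) : motive s := by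
  induction s using Finset.induction_on_min with
  | empty => exact empty
  | insert a s ha ih =>
    have s_eq : s = Ioi a := by
      ext x
      refine ⟨fun hx => mem_Ioi.2 (ha x hx), fun hx => ?_⟩
      have hax := mem_Ioi.1 hx
      exact mem_of_mem_insert_of_ne (hs hax.le (mem_insert_self a s)) hax.ne'
    subst s_eq
    rw [Ioi_insert]
    exact cons a (ih (by simpa using isUpperSet_Ioi a))

variable [Fintype ι] [LocallyFiniteOrderBot ι]

theorem sum_eq_of_forall_eq_sum_Iio {K M : Type*} [CommRing K] [AddCommGroup M] [Module K M]
    (Q : K) {u v : ι → M} {j : ι}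
    (h : ∀ k, j < k → u k = (Q - 1) • (∑ y ∈ Iio k, u y - v k)) :
    ∑ y, u y = Q ^ #(Ioi j) • ∑ y ∈ Iic j, u y -
      (Q - 1) • ∑ k ∈ Ioi j, Q ^ #(Ioi k) • v k := by
  have compl_Ioi (a : ι) : (Ioi a)ᶜ = Iic a := by ext; simp
  suffices key : Ioi j ⊆ Ioi j → ∑ y, u y =
      Q ^ #(Ioi j) • ∑ y ∈ (Ioi j)ᶜ, u y - (Q - 1) • ∑ k ∈ Ioi j, Q ^ #(Ioi k) • v k by
    simpa only [compl_Ioi] using key subset_rfl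
  refine upperSet_induction (motive := fun s => s ⊆ Ioi j →
    ∑ y, u y = Q ^ #s • ∑ y ∈ sᶜ, u y - (Q - 1) • ∑ k ∈ s, Q ^ #(Ioi k) • v k)
    (by simp) (fun a ih hsub => ?_) (by simpa using isUpperSet_Ioi j)
  · have compl_Ici : (Ici a)ᶜ = Iio a := by ext; simp
    rw [ih (Ioi_subset_Ici_self.trans hsub), compl_Ici, compl_Ioi, ← Iio_insert,
      ← Ioi_insert, sum_insert (by simp), sum_insert (by simp), card_insert_of_notMem (by simp),
      h a (mem_Ioi.1 (hsub (by simp)))]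
    module

end UpperSet

section RMatrix

variable {n : ℕ} {K : Type*} [Field K]

/-- The `R`-matrix with parameter `q` for an arbitrary order relation `r` on the indices. The
relation `<` gives `Rmat`, the flip `P R P` is the one for `>`, and inverting `R` amounts to
replacing `q` by `q⁻¹`; so all four matrices `R`, `R⁻¹`, `P R P`, `P R⁻¹ P` have this form. -/
def rMatrix (q : K) (r : Fin n → Fin n → Prop) [DecidableRel r] :
    Matrix (Fin n × Fin n) (Fin n × Fin n) K :=
  fun x y => (if x = y then if x.1 = x.2 then q else 1 else 0) +
    if x.swap = y ∧ r x.1 x.2 then q - q⁻¹ else 0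

theorem Rmat_eq_rMatrix (q : ℂ) : Rmat q n = rMatrix q (· < ·) := by
  ext ⟨a, b⟩ ⟨c, d⟩
  simp only [Rmat, rMatrix, Prod.swap_prod_mk, Prod.mk.injEq, and_assoc]
  grind

variable (q : K) (r : Fin n → Fin n → Prop) [DecidableRel r]

theorem rMatrix_submatrix_swap :
    (rMatrix q r).submatrix Prod.swap Prod.swap = rMatrix q (Function.swap r) := by
  ext ⟨a, b⟩ ⟨c, d⟩
  simp only [rMatrix, Matrix.submatrix_apply, Prod.swap_prod_mk, Prod.mk.injEq, Function.swap]
  grind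

variable {A : Type*} [Ring A] [Algebra K A] {κ : Type*}

theorem rMatrix_map_mul_apply (Y : Matrix (Fin n × Fin n) κ A) (a c : Fin n) (w : κ) :
    ((rMatrix q r).map (algebraMap K A) * Y) (a, c) w =
      (if a = c then q else 1) • Y (a, c) w + if r a c then (q - q⁻¹) • Y (c, a) w else 0 := by
  simp [Matrix.mul_apply, rMatrix, add_mul, Finset.sum_add_distrib, ite_and,
    apply_ite (algebraMap K A), Algebra.smul_def]

theorem mul_rMatrix_map_apply (Y : Matrix κ (Fin n × Fin n) A) (b d : Fin n) (w : κ) :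
    (Y * (rMatrix q r).map (algebraMap K A)) w (b, d) =
      (if b = d then q else 1) • Y w (b, d) + if r d b then (q - q⁻¹) • Y w (d, b) else 0 := by
  simp [Matrix.mul_apply, rMatrix, mul_add, Finset.sum_add_distrib, ite_and,
    Prod.swap_eq_iff_eq_swap, apply_ite (algebraMap K A), Algebra.smul_def, Algebra.commutes,
    -map_sub]

variable {q} in
theorem rMatrix_mul_rMatrix_inv [IsStrictOrder (Fin n) r] (hq : q ≠ 0) :
    rMatrix q r * rMatrix q⁻¹ r = 1 := by
  ext ⟨a, c⟩ ⟨b, d⟩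
  have h := rMatrix_map_mul_apply q r (rMatrix q⁻¹ r) a c (b, d)
  rw [Algebra.algebraMap_self, RingHom.coe_id, Matrix.map_id] at h
  rw [h]
  simp only [rMatrix, Prod.mk.injEq, Prod.swap_prod_mk, inv_inv, smul_eq_mul, ite_mul, one_mul,
    Matrix.one_apply]
  have := @asymm (Fin n) r
  have := @irrefl (Fin n) r
  grind

end RMatrix

section Legs

variable {n : ℕ} {A : Type*} [Semiring A]

theorem leg1_submatrix_swap (X : Matrix (Fin n) (Fin n) A) :
    (leg1 X).submatrix Prod.swap Prod.swap = leg2 X := rfl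

theorem leg2_submatrix_swap (X : Matrix (Fin n) (Fin n) A) :
    (leg2 X).submatrix Prod.swap Prod.swap = leg1 X := rfl

/-- The embedding `leg2` as a ring homomorphism. -/
def leg2Hom : Matrix (Fin n) (Fin n) A →+* Matrix (Fin n × Fin n) (Fin n × Fin n) A :=
  (Matrix.reindexRingEquiv A (Equiv.prodComm (Fin n) (Fin n))).toRingHom.comp
    ((Matrix.blockDiagonalRingHom (Fin n) (Fin n) A).comp (Pi.constRingHom (Fin n) _))

theorem leg2Hom_apply (X : Matrix (Fin n) (Fin n) A) : leg2Hom X = leg2 X := rfl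

theorem mul_leg1_apply {κ : Type*} (Y : Matrix κ (Fin n × Fin n) A)
    (X : Matrix (Fin n) (Fin n) A) (w : κ) (b d : Fin n) :
    (Y * leg1 X) w (b, d) = ∑ y, Y w (y, d) * X y b := by
  simp [Matrix.mul_apply, leg1, Fintype.sum_prod_type]

theorem mul_leg2_apply {κ : Type*} (Y : Matrix κ (Fin n × Fin n) A)
    (X : Matrix (Fin n) (Fin n) A) (w : κ) (b d : Fin n) :
    (Y * leg2 X) w (b, d) = ∑ y, Y w (b, y) * X y d := by
  simp [Matrix.mul_apply, leg2, Fintype.sum_prod_type]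

theorem leg1_mul_leg2_apply (l X : Matrix (Fin n) (Fin n) A) (a b c d : Fin n) :
    (leg1 l * leg2 X) (a, c) (b, d) = l a b * X c d := by
  simp [mul_leg2_apply, leg1]

end Legs

section Exchange

theorem inv_mul_mul_eq_mul_mul_inv {M : Type*} [Monoid M] (r : Mˣ) {a b : M}
    (h : ↑r * a * b = b * a * r) :
    ↑r⁻¹ * b * a = a * b * ↑r⁻¹ := by
  rw [Units.eq_mul_inv_iff_mul_eq, mul_assoc, mul_assoc, Units.inv_mul_eq_iff_eq_mul, ← mul_assoc,
    ← mul_assoc, h]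

theorem commute_mul_map_mul_inv {M N F : Type*} [Monoid M] [Monoid N] [FunLike F M N]
    [MonoidHomClass F M N] (f : F) {r a : N} {b : M} (c : Mˣ) (hb : r * a * f b = f b * a * r)
    (hc : r * a * f c = f c * a * r) : Commute (r * a) (f (b * ↑c⁻¹)) := by
  have map_inv_mul : f ↑c⁻¹ * f c = 1 := by rw [← map_mul, Units.inv_mul, map_one]
  have map_mul_inv : f c * f ↑c⁻¹ = 1 := by rw [← map_mul, Units.mul_inv, map_one]
  have hc' : a * r * f ↑c⁻¹ = f ↑c⁻¹ * (r * a) := by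
    calc a * r * f ↑c⁻¹ = f ↑c⁻¹ * (f c * a * r) * f ↑c⁻¹ := by
          simp only [← mul_assoc, map_inv_mul, one_mul]
      _ = f ↑c⁻¹ * (r * a) := by rw [← hc, mul_assoc, mul_assoc, map_mul_inv, mul_one]
  calc r * a * f (b * ↑c⁻¹) = f b * (a * r * f ↑c⁻¹) := by
        rw [map_mul, ← mul_assoc, hb, mul_assoc, mul_assoc, mul_assoc]
    _ = f (b * ↑c⁻¹) * (r * a) := by rw [hc', map_mul, mul_assoc]

variable {n : ℕ} {K : Type*} [Field K] {A : Type*} [Ring A] [Algebra K A]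

variable {q : K} (hq : q ≠ 0) (r : Fin n → Fin n → Prop) [DecidableRel r] [IsStrictOrder (Fin n) r]

/-- The matrix `rMatrix q r` over a `K`-algebra `A`, as a unit; its inverse is `rMatrix q⁻¹ r`. -/
def rMatrixUnit (A : Type*) [Ring A] [Algebra K A] : (Matrix (Fin n × Fin n) (Fin n × Fin n) A)ˣ :=
  Units.map (algebraMap K A).mapMatrix.toMonoidHom
    ⟨rMatrix q r, rMatrix q⁻¹ r, rMatrix_mul_rMatrix_inv r hq, by
      simpa using rMatrix_mul_rMatrix_inv r (inv_ne_zero hq)⟩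

variable (q) in
/-- The conjugate `R⁻¹ X₂ R`, whose weighted trace over the second leg is scalar. -/
def rMatrixConj (X : Matrix (Fin n) (Fin n) A) : Matrix (Fin n × Fin n) (Fin n × Fin n) A :=
  (rMatrix q⁻¹ r).map (algebraMap K A) * (leg2 X * (rMatrix q r).map (algebraMap K A))

include hq in
theorem rMatrixConj_apply_self (X : Matrix (Fin n) (Fin n) A) (a c : Fin n) :
    rMatrixConj q r X (a, c) (a, c) = X c c := by
  have h_asymm := @asymm (Fin n) r
  have h_irrefl := @irrefl (Fin n) r
  simp only [rMatrixConj, rMatrix_map_mul_apply, mul_rMatrix_map_apply, leg2]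
  rcases eq_or_ne a c with rfl | hac
  · simp [h_irrefl, hq]
  · by_cases h : r a c <;> simp [hac, hac.symm, h, h_asymm]

theorem rMatrixConj_apply_of_ne (X : Matrix (Fin n) (Fin n) A) {a b : Fin n} (hab : a ≠ b)
    (c : Fin n) : rMatrixConj q r X (a, c) (b, c) =
      ((q - q⁻¹) * ((if c = a then if r a b then q⁻¹ else 0 else 0) -
        (if c = b then if r a b then q else 0 else 0) -
        if r a c ∧ r c b then q - q⁻¹ else 0)) • X a b := by
  have h_irrefl := @irrefl (Fin n) r
  simp only [rMatrixConj, rMatrix_map_mul_apply, mul_rMatrix_map_apply, leg2]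
  rcases eq_or_ne c a with rfl | hca
  · by_cases h : r c b <;> simp [hab, hab.symm, h, h_irrefl, smul_smul, mul_comm]
  rcases eq_or_ne c b with rfl | hcb
  · by_cases h : r a c
    · simp only [hab, hca, h, h_irrefl, if_true, if_false, and_false, inv_inv]
      module
    · simp [hab, hca, h]
  by_cases hac : r a c
  · by_cases hcb' : r c b
    · simp only [hab, hca, hca.symm, hcb, hcb.symm, hac, hcb', if_true, if_false, inv_inv,
        smul_zero, and_self]
      module
    · simp [hab, hca, hca.symm, hcb, hcb.symm, hac, hcb']
  · simp [hab, hca, hca.symm, hcb, hcb.symm, hac]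

variable {D : Fin n → K}
  (hD : ∀ a b, r a b → q⁻¹ * D a - q * D b = (q - q⁻¹) * ∑ c with r a c ∧ r c b, D c)

include hq hD in
theorem sum_smul_rMatrixConj_apply (X : Matrix (Fin n) (Fin n) A) (a b : Fin n) :
    ∑ c, D c • rMatrixConj q r X (a, c) (b, c) = if a = b then ∑ c, D c • X c c else 0 := by
  rcases eq_or_ne a b with rfl | hab
  · simp [rMatrixConj_apply_self hq]
  have coeff_sum : ∑ c, D c * ((if c = a then if r a b then q⁻¹ else 0 else 0) -
        (if c = b then if r a b then q else 0 else 0) -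
        if r a c ∧ r c b then q - q⁻¹ else 0) =
      (if r a b then q⁻¹ * D a - q * D b else 0) -
        (q - q⁻¹) * ∑ c with r a c ∧ r c b, D c := by
    simp only [mul_sub (D _), mul_ite, mul_zero, Finset.sum_sub_distrib, Finset.sum_ite_eq',
      Finset.mem_univ, if_true, ← Finset.sum_filter, ← Finset.sum_mul]
    split_ifs <;> ring
  simp only [rMatrixConj_apply_of_ne r X hab, if_neg hab, smul_smul, ← Finset.sum_smul,
    mul_left_comm (D _) (q - q⁻¹), ← Finset.mul_sum, coeff_sum]
  by_cases h : r a b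
  · simp [h, hD a b h]
  · have no_between : ∀ c, ¬ (r a c ∧ r c b) := fun c hc => h (trans_of r hc.1 hc.2)
    simp [h, no_between]

include hq hD in
theorem commute_sum_smul_of_commute {l X : Matrix (Fin n) (Fin n) A}
    (h : Commute ((rMatrixUnit hq r A).val * leg1 l) (leg2 X)) (a b : Fin n) :
    Commute (l a b) (∑ c, D c • X c c) := by
  have conj : leg1 l * leg2 X = rMatrixConj q r X * leg1 l := by
    have h_eq := h.eq
    rw [mul_assoc, ← Units.eq_inv_mul_iff_mul_eq] at h_eq
    rw [h_eq, rMatrixConj]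
    simp only [mul_assoc]
    rfl
  calc l a b * ∑ c, D c • X c c = ∑ c, D c • (leg1 l * leg2 X) (a, c) (b, c) := by
        simp only [leg1_mul_leg2_apply, Finset.mul_sum, mul_smul_comm]
    _ = ∑ y, (∑ c, D c • rMatrixConj q r X (a, c) (y, c)) * l y b := by
        simp only [conj, mul_leg1_apply, Finset.smul_sum, Finset.sum_mul, smul_mul_assoc]
        exact Finset.sum_comm
    _ = (∑ c, D c • X c c) * l a b := by
        simp [sum_smul_rMatrixConj_apply hq r hD]

end Exchange

section QuantizedEnvelopingAlgebra

theorem sub_inv_mul_sum_zpow_between {K : Type*} [Field K] {q : K} (hq : q ≠ 0) {n : ℕ} (k : ℤ)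
    {a b : Fin n} (hab : a < b) :
    (q - q⁻¹) * ∑ c with a < c ∧ c < b, q ^ (k - 2 * (c : ℤ)) =
      q⁻¹ * q ^ (k - 2 * (a : ℤ)) - q * q ^ (k - 2 * (b : ℤ)) := by
  have filter_eq : ({c | a < c ∧ c < b} : Finset (Fin n)) = Finset.Ioo a b := by ext; simp
  have sum_eq : ∑ c ∈ Finset.Ioo a b, q ^ (k - 2 * (c : ℤ)) =
      ∑ c ∈ Finset.Ico (a + 1 : ℕ) b, q ^ (k - 2 * (c : ℤ)) := by
    rw [Finset.Ico_add_one_left_eq_Ioo, ← Fin.map_valEmbedding_Ioo, Finset.sum_map]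
    rfl
  have term_eq (c : ℕ) : (q - q⁻¹) * q ^ (k - 2 * (c : ℤ)) =
      -q ^ (k + 1 - 2 * ((c + 1 : ℕ) : ℤ)) - -q ^ (k + 1 - 2 * (c : ℤ)) := by
    rw [sub_mul, ← zpow_one_add₀ hq, ← _root_.zpow_neg_one, ← zpow_add₀ hq, neg_sub_neg]
    push_cast
    ring_nf
  rw [filter_eq, sum_eq, Finset.mul_sum, Finset.sum_congr rfl fun c _ => term_eq c,
    Finset.sum_Ico_sub (fun c : ℕ => -q ^ (k + 1 - 2 * (c : ℤ))) (by simpa using hab),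
    ← zpow_one_add₀ hq, ← _root_.zpow_neg_one, ← zpow_add₀ hq]
  push_cast
  ring_nf

variable {q : ℂ} {n : ℕ}

theorem trq_eq_sum_smul {A : Type*} [Ring A] [Algebra ℂ A] (X : Matrix (Fin n) (Fin n) A) :
    trq q X = ∑ c : Fin n, q ^ ((n : ℤ) - 1 - 2 * (c : ℤ)) • X c c := by
  simp only [trq, Dmat, Matrix.trace, Matrix.diag_apply, Matrix.diagonal_mul, Algebra.smul_def]

theorem commute_trq_of_commute_lt (hq : q ≠ 0) {A : Type*} [Ring A] [Algebra ℂ A]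
    {l X : Matrix (Fin n) (Fin n) A}
    (h : Commute ((rMatrixUnit hq (· < ·) A).val * leg1 l) (leg2 X)) (a b : Fin n) :
    Commute (l a b) (trq q X) := by
  rw [trq_eq_sum_smul]
  exact commute_sum_smul_of_commute hq (· < ·)
    (fun a b hab => (sub_inv_mul_sum_zpow_between hq _ hab).symm) h a b

theorem commute_trq_of_commute_gt (hq : q ≠ 0) {A : Type*} [Ring A] [Algebra ℂ A]
    {l X : Matrix (Fin n) (Fin n) A}
    (h : Commute ((rMatrixUnit (inv_ne_zero hq) (· > ·) A).val * leg1 l) (leg2 X)) (a b : Fin n) :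
    Commute (l a b) (trq q X) := by
  rw [trq_eq_sum_smul]
  refine commute_sum_smul_of_commute (inv_ne_zero hq) (· > ·) (fun a b hab => ?_) h a b
  have between := sub_inv_mul_sum_zpow_between hq ((n : ℤ) - 1) hab
  simp only [gt_iff_lt, and_comm, inv_inv] at between ⊢
  linear_combination between

theorem LM_false_of_lt {i j : Fin n} (hij : i < j) : LM q n false i j = 0 := by
  simpa [LM, lG] using RingQuot.mkAlgHom_rel ℂ (relGL.tri_minus (q := q) hij)

theorem LM_true_of_gt {i j : Fin n} (hij : j < i) : LM q n true i j = 0 := by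
  simpa [LM, lG] using RingQuot.mkAlgHom_rel ℂ (relGL.tri_plus (q := q) hij)

theorem LM_true_mul_LM_false (i : Fin n) : LM q n true i i * LM q n false i i = 1 := by
  simpa [LM, lG] using RingQuot.mkAlgHom_rel ℂ (relGL.diag_pm (q := q) i)

theorem rMatrixUnit_mul_leg1_mul_leg2_of_relGL (hq : q ≠ 0) {p p' : Bool}
    (h : ∀ v w, relGL q n ((RcGL q n * leg1 (gl n p) * leg2 (gl n p')) v w)
      ((leg2 (gl n p') * leg1 (gl n p) * RcGL q n) v w)) :
    (rMatrixUnit hq (· < ·) (UqGL q n)).val * leg1 (LM q n p) * leg2 (LM q n p') =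
      leg2 (LM q n p') * leg1 (LM q n p) * (rMatrixUnit hq (· < ·) (UqGL q n)).val := by
  have map_leg1 (p : Bool) :
      (leg1 (gl n p)).map (RingQuot.mkAlgHom ℂ (relGL q n)) = leg1 (LM q n p) := by
    ext v w
    simp only [Matrix.map_apply, leg1, LM, lG, apply_ite (RingQuot.mkAlgHom ℂ (relGL q n)),
      map_zero]
  have map_leg2 (p : Bool) :
      (leg2 (gl n p)).map (RingQuot.mkAlgHom ℂ (relGL q n)) = leg2 (LM q n p) := by
    ext v w
    simp only [Matrix.map_apply, leg2, LM, lG, apply_ite (RingQuot.mkAlgHom ℂ (relGL q n)),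
      map_zero]
  have map_RcGL : (RcGL q n).map (RingQuot.mkAlgHom ℂ (relGL q n)) =
      (rMatrixUnit hq (· < ·) (UqGL q n)).val := by
    ext v w
    rw [RcGL, Rmat_eq_rMatrix]
    exact AlgHom.commutes _ _
  rw [← map_RcGL, ← map_leg1, ← map_leg2]
  simp only [← Matrix.map_mul]
  ext v w
  exact RingQuot.mkAlgHom_rel ℂ (h v w)

theorem rMatrixUnit_inv_mul_leg1_mul_leg2_of_relGL (hq : q ≠ 0) {p p' : Bool}
    (h : ∀ v w, relGL q n ((RcGL q n * leg1 (gl n p) * leg2 (gl n p')) v w)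
      ((leg2 (gl n p') * leg1 (gl n p) * RcGL q n) v w)) :
    (rMatrixUnit (inv_ne_zero hq) (· > ·) (UqGL q n)).val * leg1 (LM q n p') * leg2 (LM q n p) =
      leg2 (LM q n p) * leg1 (LM q n p') *
        (rMatrixUnit (inv_ne_zero hq) (· > ·) (UqGL q n)).val := by
  have swapped : (rMatrixUnit hq (· > ·) (UqGL q n)).val * leg2 (LM q n p) * leg1 (LM q n p') =
      leg1 (LM q n p') * leg2 (LM q n p) * (rMatrixUnit hq (· > ·) (UqGL q n)).val := by
    have swap_rMatrixUnit :
        (rMatrixUnit (n := n) hq (· < ·) (UqGL q n)).val.submatrix Prod.swap Prod.swap =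
          (rMatrixUnit hq (· > ·) (UqGL q n)).val :=
      congrArg (fun M : Matrix _ _ ℂ => M.map (algebraMap ℂ (UqGL q n)))
        (rMatrix_submatrix_swap q (· < ·))
    have h_swap := congrArg (fun M => M.submatrix Prod.swap Prod.swap)
      (rMatrixUnit_mul_leg1_mul_leg2_of_relGL hq h)
    have h_bij : Function.Bijective (Prod.swap : Fin n × Fin n → _) := Prod.swap_bijective
    simpa only [Matrix.submatrix_mul _ _ Prod.swap Prod.swap Prod.swap h_bij, swap_rMatrixUnit,
      leg1_submatrix_swap, leg2_submatrix_swap] using h_swap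
  exact inv_mul_mul_eq_mul_mul_inv _ swapped

/-- The matrix `L⁺(L⁻)⁻¹`, with `L⁻` given as the unit `Lm` of the matrix ring. -/
def reflectionMatrix (Lm : (Matrix (Fin n) (Fin n) (UqGL q n))ˣ) :
    Matrix (Fin n) (Fin n) (UqGL q n) :=
  LM q n true * Lm⁻¹.val

variable {Lm : (Matrix (Fin n) (Fin n) (UqGL q n))ˣ} (hLm : Lm.val = LM q n false)

include hLm in
theorem reflectionMatrix_pow_succ_mul_LM_false (m : ℕ) :
    reflectionMatrix Lm ^ (m + 1) * LM q n false = reflectionMatrix Lm ^ m * LM q n true := by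
  rw [pow_succ, mul_assoc, reflectionMatrix, ← hLm, Units.inv_mul_cancel_right]

include hLm in
theorem commute_leg2_reflectionMatrix_pow
    {r l : Matrix (Fin n × Fin n) (Fin n × Fin n) (UqGL q n)}
    (h_true : r * l * leg2 (LM q n true) = leg2 (LM q n true) * l * r)
    (h_false : r * l * leg2 (LM q n false) = leg2 (LM q n false) * l * r) (m : ℕ) :
    Commute (r * l) (leg2 (reflectionMatrix Lm ^ m)) := by
  rw [← leg2Hom_apply, map_pow]
  rw [← hLm] at h_false
  exact (commute_mul_map_mul_inv leg2Hom Lm h_true h_false).pow_right m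

include hLm in
theorem commute_leg1_LM_true_leg2_reflectionMatrix_pow (hq : q ≠ 0) (m : ℕ) :
    Commute ((rMatrixUnit hq (· < ·) (UqGL q n)).val * leg1 (LM q n true))
      (leg2 (reflectionMatrix Lm ^ m)) :=
  commute_leg2_reflectionMatrix_pow hLm
    (rMatrixUnit_mul_leg1_mul_leg2_of_relGL hq (relGL.rll true))
    (rMatrixUnit_mul_leg1_mul_leg2_of_relGL hq relGL.rll_pm) m

include hLm in
theorem commute_leg1_LM_false_leg2_reflectionMatrix_pow (hq : q ≠ 0) (m : ℕ) :
    Commute ((rMatrixUnit (inv_ne_zero hq) (· > ·) (UqGL q n)).val * leg1 (LM q n false))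
      (leg2 (reflectionMatrix Lm ^ m)) :=
  commute_leg2_reflectionMatrix_pow hLm
    (rMatrixUnit_inv_mul_leg1_mul_leg2_of_relGL hq relGL.rll_pm)
    (rMatrixUnit_inv_mul_leg1_mul_leg2_of_relGL hq (relGL.rll false)) m

theorem mem_center_of_forall_commute_LM {z : UqGL q n}
    (h : ∀ p i j, Commute (LM q n p i j) z) : z ∈ Subalgebra.center ℂ (UqGL q n) := by
  rw [Subalgebra.mem_center_iff]
  intro b
  obtain ⟨b, rfl⟩ := RingQuot.mkAlgHom_surjective ℂ (relGL q n) b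
  induction b using FreeAlgebra.induction with
  | grade0 c => rw [AlgHom.commutes, Algebra.commutes]
  | grade1 x => exact h x.1 x.2.1 x.2.2
  | mul a b ha hb => rw [map_mul, mul_assoc, hb, ← mul_assoc, ha, mul_assoc]
  | add a b ha hb => rw [map_add, add_mul, mul_add, ha, hb]

include hLm in
theorem trq_reflectionMatrix_pow_mem_center (hq : q ≠ 0) (m : ℕ) :
    trq q (reflectionMatrix Lm ^ m) ∈ Subalgebra.center ℂ (UqGL q n) :=
  mem_center_of_forall_commute_LM fun
    | true => commute_trq_of_commute_lt hq
        (commute_leg1_LM_true_leg2_reflectionMatrix_pow hLm hq m)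
    | false => commute_trq_of_commute_gt hq
        (commute_leg1_LM_false_leg2_reflectionMatrix_pow hLm hq m)

end QuantizedEnvelopingAlgebra

section HighestWeight

open Finset

variable {n : ℕ}

section ExchangeRelation

variable {K : Type*} [Field K] {A : Type*} [Ring A] [Algebra K A] {q : K} (hq : q ≠ 0)
  {l X : Matrix (Fin n) (Fin n) A}
  (h : Commute ((rMatrixUnit (inv_ne_zero hq) (· > ·) A).val * leg1 l) (leg2 X))

include h in
theorem exchange_apply {i k : Fin n} (hik : i < k) (j : Fin n) :
    l k j * X i k + (q⁻¹ - q) • (l i j * X k k) =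
      q⁻¹ • (X i k * l k j) + (q⁻¹ - q) • ∑ y ∈ Iio k, X i y * l y j := by
  let R : Matrix (Fin n × Fin n) (Fin n × Fin n) A := (rMatrixUnit (inv_ne_zero hq) (· > ·) A).val
  have lhs_entry : (R * (leg1 l * leg2 X)) (k, i) (j, k) =
      l k j * X i k + (q⁻¹ - q) • (l i j * X k k) := by
    refine (rMatrix_map_mul_apply q⁻¹ (· > ·) (leg1 l * leg2 X) k i (j, k)).trans ?_
    simp [leg1_mul_leg2_apply, hik, hik.ne']
  have rhs_entry (y : Fin n) : (leg2 X * R) (k, i) (y, k) =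
      (if y = k then q⁻¹ • X i k else 0) + if y < k then (q⁻¹ - q) • X i y else 0 := by
    refine (mul_rMatrix_map_apply q⁻¹ (· > ·) (leg2 X) y k (k, i)).trans ?_
    rcases eq_or_ne y k with rfl | hyk
    · simp [leg2]
    · simp [leg2, hyk, hyk.symm]
  have h_entry : (R * leg1 l * leg2 X) (k, i) (j, k) = (leg2 X * (R * leg1 l)) (k, i) (j, k) :=
    congrFun (congrFun h.eq (k, i)) (j, k)
  rw [← lhs_entry, ← mul_assoc, h_entry, ← mul_assoc, mul_leg1_apply]
  simp only [rhs_entry, add_mul, ite_mul, zero_mul, smul_mul_assoc, sum_add_distrib, smul_sum,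
    sum_ite_eq', mem_univ, if_true, ← sum_filter, filter_gt_eq_Iio]

variable {V : Type*} [AddCommGroup V] [Module K V] [Module A V] [IsScalarTower K A V]

include h in
theorem mul_apply_smul_of_forall_gt (hl : ∀ i j, i < j → l i j = 0) {i j : Fin n} (hij : i ≤ j)
    {ξ : V} (hX : ∀ k, j < k → X i k • ξ = 0) :
    (X * l) i j • ξ = (q ^ 2) ^ #(Ioi j) • X i j • l j j • ξ -
      (q ^ 2 - 1) • ∑ k ∈ Ioi j, (q ^ 2) ^ #(Ioi k) • l i j • X k k • ξ := by
  have recursion : ∀ k, j < k → X i k • l k j • ξ =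
      (q ^ 2 - 1) • (∑ y ∈ Iio k, X i y • l y j • ξ - l i j • X k k • ξ) := by
    intro k hjk
    have h_act := congrArg (· • ξ) (exchange_apply hq h (hij.trans_lt hjk) j)
    simp only [add_smul, smul_assoc, mul_smul, sum_smul, hX k hjk, smul_zero, zero_add] at h_act
    generalize X i k • l k j • ξ = u, ∑ y ∈ Iio k, X i y • l y j • ξ = S, l i j • X k k • ξ = w
      at h_act ⊢
    calc u = q • q⁻¹ • u := (smul_inv_smul₀ hq u).symm
      _ = q • ((q⁻¹ - q) • w - (q⁻¹ - q) • S) := by rw [eq_sub_of_add_eq h_act.symm]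
      _ = (q ^ 2 - 1) • (S - w) := by match_scalars <;> field_simp <;> ring
  have sum_Iic : ∑ y ∈ Iic j, X i y • l y j • ξ = X i j • l j j • ξ := by
    refine sum_eq_single_of_mem j (by simp) fun y hy hyj => ?_
    rw [hl y j ((mem_Iic.1 hy).lt_of_ne hyj), zero_smul, smul_zero]
  rw [← sum_Iic, ← sum_eq_of_forall_eq_sum_Iio (q ^ 2) recursion, Matrix.mul_apply, sum_smul]
  simp only [mul_smul]

end ExchangeRelation

variable {q : ℂ} {V : Type*} [AddCommGroup V] [Module ℂ V] [Module (UqGL q n) V]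

variable (q) in
/-- `ξ` is annihilated by the entries of `L⁺` above the diagonal and is a weight vector for the
diagonal of `L⁻`, with weights `μ i` (that is, `q ^ λᵢ`). -/
structure IsHighestWeightVector (μ : Fin n → ℂ) (ξ : V) : Prop where
  raising : ∀ i j, i < j → LM q n true i j • ξ = 0
  weight : ∀ i, LM q n false i i • ξ = μ i • ξ

variable [IsScalarTower ℂ (UqGL q n) V] {μ : Fin n → ℂ} {ξ : V}
  (hξ : IsHighestWeightVector q μ ξ) (hμ : ∀ i, μ i ≠ 0)

include hξ hμ in
theorem LM_true_diag_smul (i : Fin n) : LM q n true i i • ξ = (μ i)⁻¹ • ξ := by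
  rw [eq_inv_smul_iff₀ (hμ i), ← smul_algebra_smul_comm, ← hξ.weight, ← mul_smul,
    LM_true_mul_LM_false, one_smul]

include hξ hμ in
theorem mul_LM_true_apply_smul (X : Matrix (Fin n) (Fin n) (UqGL q n)) (i j : Fin n) :
    (X * LM q n true) i j • ξ = (μ j)⁻¹ • X i j • ξ := by
  rw [Matrix.mul_apply, sum_smul, sum_eq_single_of_mem j (mem_univ j), mul_smul,
    LM_true_diag_smul hξ hμ, smul_algebra_smul_comm]
  intro y _ hyj
  rcases hyj.lt_or_gt with h | h
  · rw [mul_smul, hξ.raising y j h, smul_zero]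
  · rw [LM_true_of_gt h, mul_zero, zero_smul]

variable {Lm : (Matrix (Fin n) (Fin n) (UqGL q n))ˣ} (hLm : Lm.val = LM q n false) (hq : q ≠ 0)

include hξ hμ hLm hq in
theorem reflectionMatrix_pow_apply_smul_of_lt (m : ℕ) {i j : Fin n} (hij : i < j) :
    (reflectionMatrix Lm ^ m) i j • ξ = 0 := by
  induction m generalizing j with
  | zero => rw [pow_zero, Matrix.one_apply_ne hij.ne, zero_smul]
  | succ m ih_pow =>
    induction j using WellFoundedGT.induction with
    | ind j ih =>
      have h := mul_apply_smul_of_forall_gt hq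
        (commute_leg1_LM_false_leg2_reflectionMatrix_pow hLm hq (m + 1))
        (fun _ _ => LM_false_of_lt) hij.le (ξ := ξ) fun k hjk => ih k hjk (hij.trans hjk)
      rw [reflectionMatrix_pow_succ_mul_LM_false hLm, mul_LM_true_apply_smul hξ hμ, ih_pow hij,
        hξ.weight, LM_false_of_lt hij, smul_algebra_smul_comm (μ j)] at h
      simpa [hq, hμ] using h.symm

variable (q μ) in
/-- The variable `(μᵢ² q^(2 (n - i)))⁻¹`, for `i` counted from `1`: it is `q ^ (-2 ℓᵢ)` when
`μᵢ = q ^ λᵢ`. -/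
noncomputable def spectralParameter (i : Fin n) : ℂ := (μ i ^ 2 * (q ^ 2) ^ #(Ioi i))⁻¹

include hξ hμ hLm hq in
theorem reflectionMatrix_pow_succ_diag_smul (m : ℕ) (i : Fin n) {c : ℂ}
    (hc : ∑ k ∈ Ioi i, (q ^ 2) ^ #(Ioi k) • (reflectionMatrix Lm ^ (m + 1)) k k • ξ = c • ξ) :
    (q ^ 2) ^ #(Ioi i) • (reflectionMatrix Lm ^ (m + 1)) i i • ξ =
      spectralParameter q μ i • (q ^ 2) ^ #(Ioi i) • (reflectionMatrix Lm ^ m) i i • ξ +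
        ((q ^ 2 - 1) * c) • ξ := by
  have h := mul_apply_smul_of_forall_gt hq
    (commute_leg1_LM_false_leg2_reflectionMatrix_pow hLm hq (m + 1))
    (fun _ _ => LM_false_of_lt) (le_refl i) (ξ := ξ) fun k hik =>
      reflectionMatrix_pow_apply_smul_of_lt hξ hμ hLm hq (m + 1) hik
  have sum_eq : ∑ k ∈ Ioi i, (q ^ 2) ^ #(Ioi k) • LM q n false i i •
      (reflectionMatrix Lm ^ (m + 1)) k k • ξ = c • μ i • ξ := by
    rw [← hξ.weight, ← smul_algebra_smul_comm, ← hc, smul_sum]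
    exact sum_congr rfl fun k _ => (smul_algebra_smul_comm _ _ _).symm
  rw [sum_eq, reflectionMatrix_pow_succ_mul_LM_false hLm, mul_LM_true_apply_smul hξ hμ, hξ.weight,
    smul_algebra_smul_comm (μ i)] at h
  generalize (reflectionMatrix Lm ^ m) i i • ξ = u,
    (reflectionMatrix Lm ^ (m + 1)) i i • ξ = w at h ⊢
  have hμi := hμ i
  calc (q ^ 2) ^ #(Ioi i) • w = (μ i)⁻¹ • (q ^ 2) ^ #(Ioi i) • μ i • w := by
        match_scalars; field_simp
    _ = (μ i)⁻¹ • ((μ i)⁻¹ • u + (q ^ 2 - 1) • c • μ i • ξ) := by rw [h, sub_add_cancel]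
    _ = _ := by rw [spectralParameter]; match_scalars <;> field_simp

include hξ hμ hLm hq in
theorem sum_reflectionMatrix_pow_apply_smul (hq2 : q ^ 2 ≠ 1)
    (hinj : Function.Injective (spectralParameter q μ)) {s : Finset (Fin n)}
    (hs : IsUpperSet (s : Set (Fin n))) (m : ℕ) :
    ∑ k ∈ s, (q ^ 2) ^ #(Ioi k) • (reflectionMatrix Lm ^ m) k k • ξ =
      hallLittlewoodSum (q ^ 2) m (s.image (spectralParameter q μ)) • ξ := by
  refine upperSet_induction (motive := fun s => ∀ m,
    ∑ k ∈ s, (q ^ 2) ^ #(Ioi k) • (reflectionMatrix Lm ^ m) k k • ξ =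
      hallLittlewoodSum (q ^ 2) m (s.image (spectralParameter q μ)) • ξ)
    (by simp [hallLittlewoodSum_empty]) (fun a ih m => ?_) hs m
  have notMem : spectralParameter q μ a ∉ (Ioi a).image (spectralParameter q μ) := by
    simp [hinj.eq_iff]
  rw [← Ioi_insert, sum_insert (by simp), image_insert, ih]
  induction m with
  | zero =>
    rw [hallLittlewoodSum_zero_insert hq2 notMem, card_image_of_injective _ hinj]
    · simp only [pow_zero, Matrix.one_apply_eq, one_smul]
      module
    · simp [spectralParameter, hq, hμ]
  | succ m ih_pow =>
    rw [hallLittlewoodSum_succ_insert _ _ notMem,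
      reflectionMatrix_pow_succ_diag_smul hξ hμ hLm hq m a (ih (m + 1)),
      eq_sub_of_add_eq ih_pow]
    module

include hξ hμ hLm hq in
theorem trq_reflectionMatrix_pow_smul (hq2 : q ^ 2 ≠ 1)
    (hinj : Function.Injective (spectralParameter q μ)) (m : ℕ) :
    trq q (reflectionMatrix Lm ^ m) • ξ =
      (q ^ (1 - (n : ℤ)) *
        hallLittlewoodSum (q ^ 2) m (univ.image (spectralParameter q μ))) • ξ := by
  have weight_eq (c : Fin n) :
      q ^ ((n : ℤ) - 1 - 2 * (c : ℤ)) = q ^ (1 - (n : ℤ)) * (q ^ 2) ^ #(Ioi c) := by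
    rw [← pow_mul, ← zpow_natCast, ← zpow_add₀ hq, Fin.card_Ioi]
    congr 1
    have := c.isLt
    push_cast
    omega
  rw [mul_smul, ← sum_reflectionMatrix_pow_apply_smul hξ hμ hLm hq hq2 hinj
      (by simpa using isUpperSet_univ),
    trq_eq_sum_smul, sum_smul, smul_sum]
  simp only [weight_eq, mul_smul, smul_assoc]

end HighestWeight

section Eigenvalue

theorem sub_inv_ne_zero {K : Type*} [Field K] {q : K} (hq : q ≠ 0) (hq2 : q ^ 2 ≠ 1) :
    q - q⁻¹ ≠ 0 := by
  rw [sub_ne_zero, Ne, ← mul_eq_one_iff_eq_inv₀ hq, ← sq]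
  exact hq2

variable {q : ℂ} {n : ℕ} (hq : q ≠ 0) (hq2 : q ^ 2 ≠ 1)

include hq hq2 in
theorem mul_zpow_sub_div_eq_qint_div {a b : ℤ} (h : q ^ (-(2 * a)) ≠ q ^ (-(2 * b))) :
    (q ^ 2 * q ^ (-(2 * b)) - q ^ (-(2 * a))) / (q ^ (-(2 * b)) - q ^ (-(2 * a))) =
      q * (qint q (a - b + 1) / qint q (a - b)) := by
  have ha : q ^ a ≠ 0 := zpow_ne_zero _ hq
  have hb : q ^ b ≠ 0 := zpow_ne_zero _ hq
  rw [qint, qint, div_div_div_cancel_right₀ (sub_inv_ne_zero hq hq2)]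
  simp only [two_mul, _root_.zpow_neg, zpow_add₀ hq, zpow_sub₀ hq, zpow_one] at h ⊢
  generalize q ^ a = x, q ^ b = y at h ha hb ⊢
  have h_left : (y * y)⁻¹ - (x * x)⁻¹ ≠ 0 := sub_ne_zero.2 h.symm
  have hxy : x * x - y * y ≠ 0 := sub_ne_zero.2 fun h_eq => h (congrArg _ h_eq)
  have h_right : x / y - (x / y)⁻¹ ≠ 0 := by
    have : x / y - (x / y)⁻¹ = (x * x - y * y) / (x * y) := by field_simp
    rw [this]; positivity
  rw [mul_div_assoc', div_eq_div_iff h_left h_right]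
  field_simp

include hq hq2 in
theorem hallLittlewoodSum_eq_sum_qint {ℓ : Fin n → ℤ}
    (hℓ : Function.Injective fun i => q ^ (-(2 * ℓ i))) (m : ℕ) :
    q ^ (1 - (n : ℤ)) *
        hallLittlewoodSum (q ^ 2) m (Finset.univ.image fun i => q ^ (-(2 * ℓ i))) =
      ∑ k : Fin n, q ^ (-(2 * ℓ k * (m : ℤ))) *
        ((∏ j : Fin n, qint q (ℓ j - ℓ k + 1)) /
          ∏ j ∈ Finset.univ.erase k, qint q (ℓ j - ℓ k)) := by
  rw [hallLittlewoodSum, Finset.sum_image hℓ.injOn, Finset.mul_sum]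
  refine Finset.sum_congr rfl fun k _ => ?_
  have qint_one : qint q (ℓ k - ℓ k + 1) = 1 := by
    simp [qint, div_self (sub_inv_ne_zero hq hq2)]
  have pow_card : q ^ (1 - (n : ℤ)) * q ^ (n - 1) = 1 := by
    rw [← zpow_natCast, ← zpow_add₀ hq, Nat.cast_pred k.pos, sub_add_sub_cancel, sub_self,
      zpow_zero]
  have prod_eq : ∏ y ∈ (Finset.univ.image fun i => q ^ (-(2 * ℓ i))).erase (q ^ (-(2 * ℓ k))),
      (q ^ 2 * q ^ (-(2 * ℓ k)) - y) / (q ^ (-(2 * ℓ k)) - y) =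
        q ^ (n - 1) * ((∏ j : Fin n, qint q (ℓ j - ℓ k + 1)) /
          ∏ j ∈ Finset.univ.erase k, qint q (ℓ j - ℓ k)) := by
    rw [← Finset.image_erase hℓ, Finset.prod_image hℓ.injOn, Finset.prod_congr rfl fun j hj =>
      mul_zpow_sub_div_eq_qint_div hq hq2 (hℓ.ne (Finset.ne_of_mem_erase hj))]
    rw [← Finset.mul_prod_erase Finset.univ _ (Finset.mem_univ k), qint_one, one_mul,
      Finset.prod_mul_distrib, Finset.prod_const, Finset.prod_div_distrib,
      Finset.card_erase_of_mem (Finset.mem_univ k), Finset.card_fin]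
  rw [prod_eq, ← zpow_natCast, ← _root_.zpow_mul, neg_mul, mul_left_comm, ← mul_assoc (q ^ (1 - _)),
    pow_card, one_mul]

include hq in
theorem spectralParameter_zpow (lam : Fin n → ℤ) (i : Fin n) :
    spectralParameter q (fun i => q ^ lam i) i = q ^ (-(2 * (lam i + (n : ℤ) - 1 - (i : ℤ)))) := by
  have := i.isLt
  rw [spectralParameter, ← pow_mul, ← zpow_natCast, ← zpow_natCast, ← _root_.zpow_mul,
    ← zpow_add₀ hq, ← _root_.zpow_neg, Fin.card_Ioi]
  congr 1
  push_cast
  omega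

end Eigenvalue

theorem smul_eq_smul_of_mem_span_singleton {U V : Type*} [Semiring U] [AddCommMonoid V] [Module U V]
    {z c : U} (hz : ∀ u, Commute u z) (hc : ∀ u, Commute u c) {ξ : V} (h : z • ξ = c • ξ) {v : V}
    (hv : v ∈ Submodule.span U {ξ}) : z • v = c • v := by
  obtain ⟨u, rfl⟩ := Submodule.mem_span_singleton.1 hv
  rw [← mul_smul, ← (hz u).eq, mul_smul, h, ← mul_smul, (hc u).eq, mul_smul]

theorem zpow_injective_of_forall_pow_ne_one {G : Type*} [GroupWithZero G] {q : G} (hq0 : q ≠ 0)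
    (hq : ∀ k : ℕ, k ≠ 0 → q ^ k ≠ 1) : Function.Injective fun k : ℤ => q ^ k := by
  have not_isOfFinOrder : ¬ IsOfFinOrder (Units.mk0 q hq0) := fun h => by
    obtain ⟨k, hk, h_pow⟩ := isOfFinOrder_iff_pow_eq_one.1 h
    exact hq k hk.ne' (by simpa using congrArg Units.val h_pow)
  simpa [Function.comp_def] using
    Units.val_injective.comp (injective_zpow_iff_not_isOfFinOrder.2 not_isOfFinOrder)

theorem stmt_17_general (n : ℕ) (q : ℂ) (hq0 : q ≠ 0) (hq2 : q ^ 2 ≠ 1)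
    (lam : Fin n → ℤ) (ell : Fin n → ℤ)
    (hell : ∀ i : Fin n, ell i = lam i + (n : ℤ) - 1 - (i : ℤ))
    (hdist : Function.Injective fun i => q ^ (-(2 * ell i)))
    (Lminv : Matrix (Fin n) (Fin n) (UqGL q n))
    (hLm1 : LM q n false * Lminv = 1) (hLm2 : Lminv * LM q n false = 1)
    (V : Type*) [AddCommGroup V] [Module (UqGL q n) V] (ξ : V)
    (hhw1 : ∀ i j : Fin n, i < j → lG q n true i j • ξ = 0)
    (hhw2 : ∀ i : Fin n, lG q n false i i • ξ = algebraMap ℂ (UqGL q n) (q ^ (lam i)) • ξ)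
    (m : ℕ) (v : V) (hv : v ∈ Submodule.span (UqGL q n) {ξ}) :
    Matrix.trace (Dmat q n (UqGL q n) * (LM q n true * Lminv) ^ m) • v =
      algebraMap ℂ (UqGL q n)
        (∑ k : Fin n, q ^ (-(2 * ell k * (m : ℤ))) *
          ((∏ j : Fin n, qint q (ell j - ell k + 1)) /
            (∏ j ∈ Finset.univ.erase k, qint q (ell j - ell k)))) • v := by
  let : Module ℂ V := Module.compHom V (algebraMap ℂ (UqGL q n))
  have : IsScalarTower ℂ (UqGL q n) V := .of_algebraMap_smul fun _ _ => rfl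
  let Lm : (Matrix (Fin n) (Fin n) (UqGL q n))ˣ := ⟨LM q n false, Lminv, hLm1, hLm2⟩
  have hξ : IsHighestWeightVector q (fun i => q ^ lam i) ξ := ⟨hhw1, hhw2⟩
  have parameter_eq : spectralParameter q (fun i => q ^ lam i) = fun i => q ^ (-(2 * ell i)) :=
    funext fun i => by rw [spectralParameter_zpow hq0, hell]
  have central := trq_reflectionMatrix_pow_mem_center (Lm := Lm) rfl hq0 m
  have eigenvalue := trq_reflectionMatrix_pow_smul hξ (fun i => zpow_ne_zero _ hq0) (Lm := Lm) rfl
    hq0 hq2 (parameter_eq ▸ hdist) m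
  rw [parameter_eq, hallLittlewoodSum_eq_sum_qint hq0 hq2 hdist] at eigenvalue
  exact smul_eq_smul_of_mem_span_singleton (Subalgebra.mem_center_iff.1 central)
    (fun u => (Algebra.commutes _ u).symm) eigenvalue hv

/-- The eigenvalue of the central element `tr(D(L⁺(L⁻)⁻¹)^m)` in `L_q(λ)`. -/
theorem stmt_17 (n : ℕ) (hn : 1 ≤ n) (q : ℂ) (hq0 : q ≠ 0)
    (hq : ∀ k : ℕ, k ≠ 0 → q ^ k ≠ 1)
    (lam : Fin n → ℤ) (ell : Fin n → ℤ)
    (hell : ∀ i : Fin n, ell i = lam i + (n : ℤ) - 1 - (i : ℤ))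
    (hdist : Function.Injective ell)
    (Lminv : Matrix (Fin n) (Fin n) (UqGL q n))
    (hLm1 : LM q n false * Lminv = 1) (hLm2 : Lminv * LM q n false = 1)
    (V : Type*) [AddCommGroup V] [Module (UqGL q n) V]
    (hirr : IsSimpleModule (UqGL q n) V)
    (ξ : V) (hξ : ξ ≠ 0)
    (hhw1 : ∀ i j : Fin n, i < j → lG q n true i j • ξ = 0)
    (hhw2 : ∀ i : Fin n, lG q n false i i • ξ = algebraMap ℂ (UqGL q n) (q ^ (lam i)) • ξ)
    (m : ℕ) (hm : 1 ≤ m) (v : V) :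
    Matrix.trace (Dmat q n (UqGL q n) * (LM q n true * Lminv) ^ m) • v =
      algebraMap ℂ (UqGL q n)
        (∑ k : Fin n, q ^ (-(2 * ell k * (m : ℤ))) *
          ((∏ j : Fin n, qint q (ell j - ell k + 1)) /
            (∏ j ∈ Finset.univ.erase k, qint q (ell j - ell k)))) • v :=
  stmt_17_general n q hq0 (hq 2 two_ne_zero) lam ell hell
    ((zpow_injective_of_forall_pow_ne_one hq0 hq).comp
      (neg_injective.comp ((mul_right_injective₀ two_ne_zero).comp hdist)))
    Lminv hLm1 hLm2 V ξ hhw1 hhw2 m v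
    (IsSimpleModule.span_singleton_eq_top (UqGL q n) hξ ▸ Submodule.mem_top)
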